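/- arXiv:2404.05172 — 4 statements merged into one kernel-verified Lean document; each statement's English description precedes it below -/
import Mathlib

section
/- Let V be a finite set of vertices, E ⊆ V × V a set of directed edges with a cost function c : E → ℝ with c(e) ≥ 0, let k ≥ 1 be a natural number, and let P_1, …, P_k ⊆ E be k edge sets (paths). Let W = ∑_{e ∈ ⋃_i P_i} c(e). Then either (i) there exists an edge e ∈ E with |{i : e ∈ P_i}| ≥ √k, or (ii) there exists an index i with ∑_{e ∈ P_i} c(e) ≤ W / √k. -/
/-!
Double counting: if every edge lies on at most `t` of the sets `P i`, then the costs of the `P i`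
add up to at most `t * W`, since this sum counts each edge of the union at most `t` times. Hence
some `P i` costs at most the average `t * W / k`, which for `t = √k` is `W / √k`.
-/

section

variable {ι α : Type*} [DecidableEq α]

theorem sum_sum_eq_sum_biUnion_card_nsmul {M : Type*} [AddCommMonoid M]
    (s : Finset ι) (P : ι → Finset α) (c : α → M) :
    ∑ i ∈ s, ∑ e ∈ P i, c e = ∑ e ∈ s.biUnion P, (s.filter fun i => e ∈ P i).card • c e := by
  have swap : ∑ i ∈ s, ∑ e ∈ P i, c e =
      ∑ e ∈ s.biUnion P, ∑ _i ∈ s.filter fun i => e ∈ P i, c e :=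
    Finset.sum_comm' fun i e => by
      simp only [Finset.mem_filter, Finset.mem_biUnion]
      exact ⟨fun h => ⟨h, i, h⟩, And.left⟩
  simpa only [Finset.sum_const] using swap

theorem sum_sum_le_mul_sum_biUnion {R : Type*} [Semiring R] [PartialOrder R] [IsOrderedRing R]
    {s : Finset ι} {P : ι → Finset α} {c : α → R} {t : R}
    (hc : ∀ e ∈ s.biUnion P, 0 ≤ c e)
    (ht : ∀ e ∈ s.biUnion P, ((s.filter fun i => e ∈ P i).card : R) ≤ t) :
    ∑ i ∈ s, ∑ e ∈ P i, c e ≤ t * ∑ e ∈ s.biUnion P, c e := by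
  rw [sum_sum_eq_sum_biUnion_card_nsmul, Finset.mul_sum]
  refine Finset.sum_le_sum fun e he => ?_
  rw [nsmul_eq_mul]
  exact mul_le_mul_of_nonneg_right (ht e he) (hc e he)

theorem exists_le_div_card_of_sum_le {K : Type*} [Field K] [LinearOrder K] [IsStrictOrderedRing K]
    {s : Finset ι} (hs : s.Nonempty) {f : ι → K} {a : K} (h : ∑ i ∈ s, f i ≤ a) :
    ∃ i ∈ s, f i ≤ a / s.card := by
  refine Finset.exists_le_of_sum_le hs ?_
  have hcard : (s.card : K) ≠ 0 := Nat.cast_ne_zero.2 hs.card_ne_zero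
  rwa [Finset.sum_const, nsmul_eq_mul, mul_div_cancel₀ _ hcard]

theorem stmt3_general {K : Type*} [Field K] [LinearOrder K] [IsStrictOrderedRing K]
    {s : Finset ι} (hs : s.Nonempty) {P : ι → Finset α} {E : Finset α} (hP : ∀ i ∈ s, P i ⊆ E)
    {c : α → K} (hc : ∀ e ∈ E, 0 ≤ c e) (t : K) :
    (∃ e ∈ E, t ≤ ((s.filter fun i => e ∈ P i).card : K)) ∨
    (∃ i ∈ s, ∑ e ∈ P i, c e ≤ t * (∑ e ∈ s.biUnion P, c e) / s.card) := by
  refine or_iff_not_imp_left.2 fun hfew => ?_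
  push Not at hfew
  have hUE : s.biUnion P ⊆ E := Finset.biUnion_subset.2 hP
  exact exists_le_div_card_of_sum_le hs <|
    sum_sum_le_mul_sum_biUnion (fun e he => hc e (hUE he)) fun e he => (hfew e (hUE he)).le

end

/-- Let `V` be a finite vertex set, `E ⊆ V × V` a set of directed edges
with nonnegative costs `c`, `k ≥ 1`, and `P 1, …, P k ⊆ E` edge sets (paths).  With
`W = ∑_{e ∈ ⋃ i, P i} c e`, either some edge `e ∈ E` lies in at least `√k` of the sets
`P i`, or some `P i` has total cost at most `W / √k`. -/
theorem stmt3 {V : Type*} [Fintype V] [DecidableEq V]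
    (E : Finset (V × V)) (c : V × V → ℝ) (hc : ∀ e ∈ E, 0 ≤ c e)
    (k : ℕ) (hk : 1 ≤ k) (P : Fin k → Finset (V × V)) (hP : ∀ i, P i ⊆ E) :
    (∃ e ∈ E, Real.sqrt k ≤ ((Finset.univ.filter fun i => e ∈ P i).card : ℝ)) ∨
    (∃ i, ∑ e ∈ P i, c e ≤ (∑ e ∈ Finset.univ.biUnion P, c e) / Real.sqrt k) := by
  have hs : (Finset.univ : Finset (Fin k)).Nonempty := ⟨⟨0, hk⟩, Finset.mem_univ _⟩
  simpa [mul_div_right_comm, Real.sqrt_div_self, inv_mul_eq_div] using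
    stmt3_general hs (fun i _ => hP i) hc (Real.sqrt k)
end

section
/- Let n ≥ 2 be a natural number, θ > 0 and ℓ_min > 0 real numbers, and set Δ = θ·ℓ_min/(n−1). Let E be a set of edges with lengths ℓ : E → ℝ and scaled lengths ℓ̄(e) = Δ·⌈ℓ(e)/Δ⌉. Let d be a nonzero real number with |d| ≥ ℓ_min, and let sign(d) be 1 if d > 0 and −1 if d < 0. Then for every finite list P of at most n−1 edges: (i) if ∑_{e∈P} ℓ(e) ≤ d, then ∑_{e∈P} ℓ̄(e) ≤ (1 + θ·sign(d))·d; and (ii) if ∑_{e∈P} ℓ̄(e) ≤ (1 + θ·sign(d))·d, then ∑_{e∈P} ℓ(e) ≤ (1 + θ·sign(d))·d. -/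
/-!
Rounding up to a multiple of `Δ` never decreases a length and increases it by less than `Δ`, so the
total of at most `n - 1` edges grows by at most `(n - 1) * Δ = θ * ℓmin ≤ θ * |d|`. Whatever the
sign of `d`, the relaxed budget equals `d + θ * |d|`, which absorbs this growth.
-/

section Budget

variable {R : Type*} [CommRing R] [LinearOrder R] [IsOrderedRing R]

theorem one_add_mul_ite_pos_mul (θ d : R) :
    (1 + θ * if 0 < d then 1 else -1) * d = d + θ * |d| := by
  split_ifs with hd
  · rw [abs_of_pos hd]; ring
  · rw [abs_of_nonpos (not_lt.mp hd)]; ring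

end Budget

section Rounding

variable {K : Type*} [Field K] [LinearOrder K] [FloorRing K]

/-- The least integer multiple of `Δ` that is at least `x`, for `0 < Δ`; the scaled length of an
edge of length `x`. It is `0` when `Δ = 0`, and rounds down when `Δ < 0`. -/
def ceilMultiple (Δ x : K) : K :=
  Δ * (⌈x / Δ⌉ : K)

variable [IsStrictOrderedRing K] {Δ : K}

theorem le_ceilMultiple (hΔ : 0 < Δ) (x : K) : x ≤ ceilMultiple Δ x :=
  (div_le_iff₀' hΔ).mp (Int.le_ceil (x / Δ))

theorem ceilMultiple_lt_add (hΔ : 0 < Δ) (x : K) : ceilMultiple Δ x < x + Δ :=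
  calc Δ * (⌈x / Δ⌉ : K) < Δ * (x / Δ + 1) := mul_lt_mul_of_pos_left (Int.ceil_lt_add_one _) hΔ
    _ = x + Δ := by rw [mul_add, mul_one, mul_div_cancel₀ _ hΔ.ne']

variable {E : Type*}

theorem sum_map_le_sum_map_ceilMultiple (hΔ : 0 < Δ) (ℓ : E → K) (P : List E) :
    (P.map ℓ).sum ≤ (P.map fun e => ceilMultiple Δ (ℓ e)).sum :=
  List.sum_le_sum fun e _ => le_ceilMultiple hΔ (ℓ e)

theorem sum_map_ceilMultiple_le (hΔ : 0 < Δ) (ℓ : E → K) (P : List E) :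
    (P.map fun e => ceilMultiple Δ (ℓ e)).sum ≤ (P.map ℓ).sum + P.length * Δ :=
  calc (P.map fun e => ceilMultiple Δ (ℓ e)).sum
      ≤ (P.map fun e => ℓ e + Δ).sum :=
        List.sum_le_sum fun e _ => (ceilMultiple_lt_add hΔ (ℓ e)).le
    _ = (P.map ℓ).sum + P.length * Δ := by simp [List.sum_map_add]

end Rounding

theorem stmt8_general {K E : Type*} [Field K] [LinearOrder K] [IsStrictOrderedRing K] [FloorRing K]
    (n : ℕ) (hn : 2 ≤ n) (θ ℓmin : K) (hθ : 0 < θ) (hmin : 0 < ℓmin) (ℓ : E → K)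
    (d : K) (hdmin : ℓmin ≤ |d|) (P : List E) (hP : P.length ≤ n - 1) :
    let Δ : K := θ * ℓmin / ((n : K) - 1)
    let ℓbar : E → K := fun e => Δ * (⌈ℓ e / Δ⌉ : K)
    let sgn : K := if 0 < d then 1 else -1
    ((P.map ℓ).sum ≤ d → (P.map ℓbar).sum ≤ (1 + θ * sgn) * d) ∧
      ((P.map ℓbar).sum ≤ (1 + θ * sgn) * d → (P.map ℓ).sum ≤ (1 + θ * sgn) * d) := by
  intro Δ ℓbar sgn
  have hn_pos : (0 : K) < (n : K) - 1 := sub_pos.mpr (by exact_mod_cast hn)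
  have hΔ : 0 < Δ := div_pos (mul_pos hθ hmin) hn_pos
  have hlength : (P.length : K) ≤ (n : K) - 1 :=
    le_sub_iff_add_le.mpr (by exact_mod_cast (by omega : P.length + 1 ≤ n))
  have hgrowth : (P.length : K) * Δ ≤ θ * |d| :=
    calc (P.length : K) * Δ ≤ ((n : K) - 1) * Δ := mul_le_mul_of_nonneg_right hlength hΔ.le
      _ = θ * ℓmin := mul_div_cancel₀ _ hn_pos.ne'
      _ ≤ θ * |d| := mul_le_mul_of_nonneg_left hdmin hθ.le
  refine ⟨fun hfeasible => ?_, (sum_map_le_sum_map_ceilMultiple hΔ ℓ P).trans⟩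
  calc (P.map ℓbar).sum ≤ (P.map ℓ).sum + P.length * Δ := sum_map_ceilMultiple_le hΔ ℓ P
    _ ≤ d + θ * |d| := add_le_add hfeasible hgrowth
    _ = (1 + θ * sgn) * d := (one_add_mul_ite_pos_mul θ d).symm

/-- With `n ≥ 2`, `θ > 0`, `ℓmin > 0`, `Δ = θ·ℓmin/(n−1)`, scaled
lengths `ℓ̄ e = Δ·⌈ℓ e / Δ⌉`, a nonzero budget `d` with `|d| ≥ ℓmin`, and
`sign d = 1` if `d > 0` and `−1` if `d < 0`:  for every list `P` of at most `n − 1`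
edges, (i) if `∑_{e∈P} ℓ e ≤ d` then `∑_{e∈P} ℓ̄ e ≤ (1 + θ·sign d)·d`; and
(ii) if `∑_{e∈P} ℓ̄ e ≤ (1 + θ·sign d)·d` then `∑_{e∈P} ℓ e ≤ (1 + θ·sign d)·d`. -/
theorem stmt8 {E : Type*} (n : ℕ) (hn : 2 ≤ n) (θ ℓmin : ℝ)
    (hθ : 0 < θ) (hmin : 0 < ℓmin) (ℓ : E → ℝ)
    (d : ℝ) (hd : d ≠ 0) (hdmin : ℓmin ≤ |d|)
    (P : List E) (hP : P.length ≤ n - 1) :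
    let Δ : ℝ := θ * ℓmin / ((n : ℝ) - 1)
    let ℓbar : E → ℝ := fun e => Δ * (⌈ℓ e / Δ⌉ : ℝ)
    let sgn : ℝ := if 0 < d then 1 else -1
    ((P.map ℓ).sum ≤ d → (P.map ℓbar).sum ≤ (1 + θ * sgn) * d) ∧
      ((P.map ℓbar).sum ≤ (1 + θ * sgn) * d → (P.map ℓ).sum ≤ (1 + θ * sgn) * d) :=
  stmt8_general n hn θ ℓmin hθ hmin ℓ d hdmin P hP
end

section
/- Let G be a finite directed graph on n ≥ 2 vertices with edge set E, edge costs c : E → ℝ with c(e) ≥ 0, and, for i = 1,…,m, edge weights w_i : E → ℝ, budgets L_i ≠ 0, and tolerances ε_i with ε_i·L_i > 0. Set Δ_i = ε_i·L_i/(n−1) (so Δ_i > 0) and define the scaled weights w̄_i(e) = Δ_i·⌈w_i(e)/Δ_i⌉. Call an s–t path P (a walk with no repeated vertices, hence with at most n−1 edges) originally feasible if ∑_{e∈P} w_i(e) ≤ L_i for all i, and scaled-feasible if ∑_{e∈P} w̄_i(e) ≤ (1+ε_i)·L_i for all i. Then: (a) every originally feasible s–t path is scaled-feasible; (b) every scaled-feasible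 s–t path Q satisfies ∑_{e∈Q} w_i(e) ≤ (1+ε_i)·L_i for all i. Consequently, if an originally feasible s–t path exists then a scaled-feasible s–t path exists, and any scaled-feasible s–t path of minimum cost has cost at most the minimum cost of an originally feasible s–t path while violating each budget L_i by at most a factor 1+ε_i. -/
/-!
Rounding a weight up to a multiple of `d > 0` never decreases it and increases it by at most `d`,
so rounding adds at most `N * d` to the total weight of a path with at most `N` edges. The grid
width `d = ε i * L i / N` makes this error `ε i * L i`, exactly the relaxation of the `i`-th budget;
for simple paths on `n` vertices one can take `N = n - 1`.
-/

section RoundUp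

variable {K : Type*} [Field K] [LinearOrder K] [IsStrictOrderedRing K] [FloorRing K] {d : K}

/-- The least integer multiple of `d` that is at least `x`, for `d > 0`; it is `0` when `d = 0`.
It turns a weight `w_i(e)` into the scaled weight of the paper, with `d = Δ_i`. -/
def roundUp (d x : K) : K := d * ⌈x / d⌉

theorem le_roundUp (hd : 0 < d) (x : K) : x ≤ roundUp d x :=
  (div_le_iff₀' hd).mp (Int.le_ceil _)

theorem roundUp_lt_add (hd : 0 < d) (x : K) : roundUp d x < x + d :=
  calc d * (⌈x / d⌉ : K) < d * (x / d + 1) := by gcongr; exact Int.ceil_lt_add_one _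
    _ = x + d := by field_simp

variable {α : Type*}

theorem sum_map_le_sum_map_roundUp (hd : 0 < d) (w : α → K) (l : List α) :
    (l.map w).sum ≤ (l.map fun a => roundUp d (w a)).sum :=
  List.sum_le_sum fun a _ => le_roundUp hd (w a)

theorem sum_map_roundUp_le_add (hd : 0 < d) (w : α → K) (l : List α) :
    (l.map fun a => roundUp d (w a)).sum ≤ (l.map w).sum + l.length * d :=
  calc (l.map fun a => roundUp d (w a)).sum
      ≤ (l.map fun a => w a + d).sum := List.sum_le_sum fun a _ => (roundUp_lt_add hd (w a)).le
    _ = (l.map w).sum + l.length * d := by simp [List.sum_map_add]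

theorem sum_map_roundUp_le_of_length_le {N L ε : K} (hN : 0 < N) (hεL : 0 < ε * L) {w : α → K}
    {l : List α} (hlen : (l.length : K) ≤ N) (hw : (l.map w).sum ≤ L) :
    (l.map fun a => roundUp (ε * L / N) (w a)).sum ≤ (1 + ε) * L :=
  have hd : 0 < ε * L / N := div_pos hεL hN
  calc (l.map fun a => roundUp (ε * L / N) (w a)).sum
      ≤ (l.map w).sum + l.length * (ε * L / N) := sum_map_roundUp_le_add hd w l
    _ ≤ L + N * (ε * L / N) := by gcongr
    _ = (1 + ε) * L := by field_simp

end RoundUp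

section Paths

variable {V : Type*}

/-- The list of vertices `vs` is an `s`–`t` path in the directed graph with edge relation `E`,
without repeated vertices. -/
def IsSimplePath (E : V → V → Prop) (s t : V) (vs : List V) : Prop :=
  vs.head? = some s ∧ vs.getLast? = some t ∧ vs.Nodup ∧ vs.IsChain E

/-- The edges of a path given by its list of vertices: the pairs of consecutive vertices. -/
def pathEdges (vs : List V) : List (V × V) := vs.zip vs.tail

/-- The feasibility condition of the resource-constrained problem: for every resource `i`, the total
`w i`-weight of the path `vs` is at most the budget `B i`. -/
def WithinBudgets {ι K : Type*} [AddMonoid K] [LE K] (w : ι → V × V → K) (B : ι → K)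
    (vs : List V) : Prop :=
  ∀ i, ((pathEdges vs).map (w i)).sum ≤ B i

theorem length_pathEdges_lt_card [Fintype V] [Nonempty V] {vs : List V} (hvs : vs.Nodup) :
    (pathEdges vs).length < Fintype.card V := by
  have hcard : 0 < Fintype.card V := Fintype.card_pos
  have hle : vs.length ≤ Fintype.card V := hvs.length_le_card
  simp only [pathEdges, List.length_zip, List.length_tail]
  lia

end Paths

theorem stmt9_general {V ι K C : Type*} [Field K] [LinearOrder K] [IsStrictOrderedRing K]
    [FloorRing K] [LE C] {E : V → V → Prop} {s t : V} {N : K} (hN : 0 < N)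
    (hlen : ∀ vs, IsSimplePath E s t vs → ((pathEdges vs).length : K) ≤ N)
    (cost : List V → C) (w : ι → V × V → K) {L ε : ι → K} (hεL : ∀ i, 0 < ε i * L i) :
    let wbar : ι → V × V → K := fun i e => roundUp (ε i * L i / N) (w i e)
    let relaxed : ι → K := fun i => (1 + ε i) * L i
    (∀ vs, IsSimplePath E s t vs → WithinBudgets w L vs → WithinBudgets wbar relaxed vs) ∧
    (∀ vs, IsSimplePath E s t vs → WithinBudgets wbar relaxed vs → WithinBudgets w relaxed vs) ∧
    ((∃ vs, IsSimplePath E s t vs ∧ WithinBudgets w L vs) →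
      ∃ vs, IsSimplePath E s t vs ∧ WithinBudgets wbar relaxed vs) ∧
    (∀ Q, IsSimplePath E s t Q → WithinBudgets wbar relaxed Q →
      (∀ Q', IsSimplePath E s t Q' → WithinBudgets wbar relaxed Q' → cost Q ≤ cost Q') →
      (∀ P, IsSimplePath E s t P → WithinBudgets w L P → cost Q ≤ cost P) ∧
        WithinBudgets w relaxed Q) := by
  intro wbar relaxed
  have scaled_of_orig : ∀ vs, IsSimplePath E s t vs → WithinBudgets w L vs →
      WithinBudgets wbar relaxed vs := fun vs hvs horig i =>
    sum_map_roundUp_le_of_length_le hN (hεL i) (hlen vs hvs) (horig i)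
  have relaxed_of_scaled : ∀ vs, WithinBudgets wbar relaxed vs → WithinBudgets w relaxed vs :=
    fun vs hscaled i =>
      (sum_map_le_sum_map_roundUp (div_pos (hεL i) hN) (w i) (pathEdges vs)).trans (hscaled i)
  exact ⟨scaled_of_orig, fun vs _ => relaxed_of_scaled vs,
    fun ⟨vs, hvs, horig⟩ => ⟨vs, hvs, scaled_of_orig vs hvs horig⟩,
    fun Q _ hscaled hmin =>
      ⟨fun P hP horig => hmin P hP (scaled_of_orig P hP horig), relaxed_of_scaled Q hscaled⟩⟩

/-- Scaling lemma for `m`-dimensional resource-constrained shortest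
paths.  A path from `s` to `t` is modelled as a list of vertices with head `s`, last
vertex `t`, no repeated vertices, and consecutive vertices joined by edges of `E`;
its edges are the consecutive pairs.  (a) Every originally feasible `s–t` path is
scaled-feasible; (b) every scaled-feasible `s–t` path satisfies each original budget
up to a factor `1 + ε i`; consequently, if an originally feasible path exists then a
scaled-feasible one exists, and any minimum-cost scaled-feasible path has cost at most
the cost of every originally feasible path while violating each budget `L i` by at
most a factor `1 + ε i`. -/
theorem stmt9 {V : Type*} [Fintype V] [DecidableEq V]
    (n : ℕ) (hn : 2 ≤ n) (hcard : Fintype.card V = n)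
    (E : Finset (V × V)) (c : V × V → ℝ) (hc : ∀ e ∈ E, 0 ≤ c e)
    (m : ℕ) (w : Fin m → V × V → ℝ) (L ε : Fin m → ℝ)
    (hL : ∀ i, L i ≠ 0) (hεL : ∀ i, 0 < ε i * L i) (s t : V) :
    let Δ : Fin m → ℝ := fun i => ε i * L i / ((n : ℝ) - 1)
    let wbar : Fin m → V × V → ℝ := fun i e => Δ i * (⌈w i e / Δ i⌉ : ℝ)
    let IsPath : List V → Prop := fun vs =>
      vs.head? = some s ∧ vs.getLast? = some t ∧ vs.Nodup ∧
        vs.Chain' fun u v => (u, v) ∈ E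
    let cost : List V → ℝ := fun vs => ((vs.zip vs.tail).map c).sum
    let origFeas : List V → Prop := fun vs =>
      ∀ i, ((vs.zip vs.tail).map (w i)).sum ≤ L i
    let scaledFeas : List V → Prop := fun vs =>
      ∀ i, ((vs.zip vs.tail).map (wbar i)).sum ≤ (1 + ε i) * L i
    (∀ vs, IsPath vs → origFeas vs → scaledFeas vs) ∧
    (∀ vs, IsPath vs → scaledFeas vs →
      ∀ i, ((vs.zip vs.tail).map (w i)).sum ≤ (1 + ε i) * L i) ∧
    ((∃ vs, IsPath vs ∧ origFeas vs) → ∃ vs, IsPath vs ∧ scaledFeas vs) ∧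
    (∀ Q, IsPath Q → scaledFeas Q →
      (∀ Q', IsPath Q' → scaledFeas Q' → cost Q ≤ cost Q') →
      (∀ P, IsPath P → origFeas P → cost Q ≤ cost P) ∧
        ∀ i, ((Q.zip Q.tail).map (w i)).sum ≤ (1 + ε i) * L i) := by
  subst hcard
  have : Nonempty V := ⟨s⟩
  exact stmt9_general (E := fun u v => (u, v) ∈ E) (sub_pos.mpr (Nat.one_lt_cast.mpr hn))
    (fun _ ⟨_, _, hnodup, _⟩ =>
      le_sub_iff_add_le.mpr (mod_cast length_pathEdges_lt_card hnodup))
    (fun vs => ((pathEdges vs).map c).sum) w hεL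
end

section
/- Let V be a finite set with a distinguished source s ∈ V, let E ⊆ V × V be a set of directed edges with costs c : E → ℝ with c(e) ≥ 0, and for each edge e let d(e) ∈ ℤ^m be its (integer) weight vector. Define DP : V × ℤ^m × ℕ → [0, ∞] by: DP(v, η, 0) = 0 if v = s and η_i ≥ 0 for every i, and DP(v, η, 0) = ∞ otherwise; and DP(v, η, h+1) = min( DP(v, η, h), min over edges (u,v) ∈ E of ( DP(u, η − d(u,v), h) + c(u,v) ) ). Then for every v ∈ V, η ∈ ℤ^m and h ∈ ℕ, DP(v, η, h) equals the infimum, over all walks from s to v using at most h edges whose total weight vector ∑_{e ∈ walk} d(e) is componentwise at most η, of the total cost ∑_{e ∈ walk} c(e) (the infimum being ∞ if no such walk exists). -/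
open scoped BigOperators

/-- The Bellman–Ford-style dynamic programming table for resource-constrained shortest
paths with integer weight vectors: `DP s E c d v η h` is defined by
`DP v η 0 = 0` if `v = s` and `η` is componentwise nonnegative (else `∞`), and
`DP v η (h+1) = min (DP v η h) (min over edges (u,v) ∈ E of (DP u (η − d (u,v)) h + c (u,v)))`. -/
noncomputable def DP {V : Type*} [Fintype V] [DecidableEq V] {m : ℕ} (s : V)
    (E : Finset (V × V)) (c : V × V → ℝ) (d : V × V → Fin m → ℤ) :
    V → (Fin m → ℤ) → ℕ → EReal
  | v, η, 0 => if v = s ∧ ∀ i, 0 ≤ η i then (0 : EReal) else ⊤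
  | v, η, h + 1 =>
      DP s E c d v η h ⊓
        (Finset.univ.filter fun u : V => (u, v) ∈ E).inf
          fun u => DP s E c d u (η - d (u, v)) h + ((c (u, v) : ℝ) : EReal)

/-!
A walk to `v` with at most `h + 1` edges and weight at most `η` either has at most `h` edges, or
arises by appending an edge `(u, v)` to a walk to `u` with at most `h` edges and weight at most
`η - d (u, v)`. Since `x ↦ x + c (u, v)` commutes with arbitrary infima in `EReal`, the least
cost of a walk satisfies the recursion that defines `DP`, and the two agree by induction on `h`.
-/

section WalkSum

variable {V M : Type*}

/-- The list of edges traversed by a walk, where the walk is encoded as its list of vertices. -/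
def walkEdges (vs : List V) : List (V × V) :=
  vs.zip vs.tail

lemma walkEdges_concat {us : List V} {u : V} (hu : us.getLast? = some u) (v : V) :
    walkEdges (us ++ [v]) = walkEdges us ++ [(u, v)] := by
  induction us with
  | nil => simp at hu
  | cons a us ih =>
    cases us with
    | nil => simpa [walkEdges] using hu
    | cons b us => simpa [walkEdges] using ih (by simpa using hu)

/-- The total of an edge labelling `f` (a cost or a weight) along a walk, with multiplicity. -/
def walkSum [AddMonoid M] (f : V × V → M) (vs : List V) : M :=
  ((walkEdges vs).map f).sum

lemma walkSum_singleton [AddMonoid M] (f : V × V → M) (v : V) : walkSum f [v] = 0 := rfl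

lemma walkSum_concat [AddMonoid M] (f : V × V → M) {us : List V} {u : V}
    (hu : us.getLast? = some u) (v : V) :
    walkSum f (us ++ [v]) = walkSum f us + f (u, v) := by
  simp [walkSum, walkEdges_concat hu]

lemma walkSum_apply {ι : Type*} {N : ι → Type*} [∀ i, AddMonoid (N i)]
    (f : V × V → ∀ i, N i) (vs : List V) (i : ι) :
    walkSum f vs i = walkSum (fun e => f e i) vs := by
  simp [walkSum, Pi.list_sum_apply, Function.comp_def]

end WalkSum

section BoundedWalks

variable {V M : Type*} [LE M]

/-- The walks from `s` to `v` along edges in `E` that use at most `h` edges and whose total weight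
is at most `η`. Like the walks of `walkEdges`, they are encoded as lists of vertices. -/
def boundedWalks [AddMonoid M] (s : V) (E : Set (V × V)) (d : V × V → M) (v : V) (η : M)
    (h : ℕ) : Set (List V) :=
  {vs | vs.head? = some s ∧ vs.getLast? = some v ∧ vs.IsChain (fun a b => (a, b) ∈ E) ∧
    (walkEdges vs).length ≤ h ∧ walkSum d vs ≤ η}

variable (s : V) (E : Set (V × V)) (d : V × V → M) (v : V) (η : M) (h : ℕ)

lemma singleton_mem_boundedWalks_iff [AddMonoid M] (w : V) :
    [w] ∈ boundedWalks s E d v η h ↔ w = s ∧ w = v ∧ 0 ≤ η := by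
  simp [boundedWalks, walkEdges, walkSum_singleton]

lemma concat_mem_boundedWalks_succ_iff [AddGroup M] [AddRightMono M] {us : List V} {u : V}
    (hu : us.getLast? = some u) :
    us ++ [v] ∈ boundedWalks s E d v η (h + 1) ↔
      (u, v) ∈ E ∧ us ∈ boundedWalks s E d u (η - d (u, v)) h := by
  have head_concat : (us ++ [v]).head? = us.head? := by
    cases us with
    | nil => simp at hu
    | cons a us => simp
  have isChain_concat : (us ++ [v]).IsChain (fun a b => (a, b) ∈ E) ↔
      us.IsChain (fun a b => (a, b) ∈ E) ∧ (u, v) ∈ E := by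
    simp [List.isChain_append, hu]
  simp only [boundedWalks, Set.mem_ofPred_eq, head_concat, isChain_concat, walkEdges_concat hu,
    walkSum_concat d hu, List.getLast?_concat, List.length_append, List.length_singleton,
    add_le_add_iff_right, le_sub_iff_add_le, hu]
  tauto

lemma boundedWalks_zero [AddMonoid M] :
    boundedWalks s E d v η 0 = {vs | vs = [s] ∧ v = s ∧ 0 ≤ η} := by
  ext vs
  constructor
  · intro hvs
    obtain ⟨us, rfl⟩ := List.getLast?_eq_some_iff.1 hvs.2.1
    obtain rfl : us = [] := by simpa [walkEdges] using hvs.2.2.2.1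
    obtain ⟨rfl, -, hη⟩ := (singleton_mem_boundedWalks_iff s E d v η 0 v).1 hvs
    exact ⟨rfl, rfl, hη⟩
  · rintro ⟨rfl, rfl, hη⟩
    exact (singleton_mem_boundedWalks_iff v E d v η 0 v).2 ⟨rfl, rfl, hη⟩

lemma boundedWalks_subset_succ [AddMonoid M] :
    boundedWalks s E d v η h ⊆ boundedWalks s E d v η (h + 1) :=
  fun _ ⟨hhead, hlast, hchain, hlength, hweight⟩ =>
    ⟨hhead, hlast, hchain, hlength.trans h.le_succ, hweight⟩

lemma boundedWalks_succ [AddGroup M] [AddRightMono M] :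
    boundedWalks s E d v η (h + 1) = boundedWalks s E d v η h ∪
      ⋃ (u) (_ : (u, v) ∈ E), (· ++ [v]) '' boundedWalks s E d u (η - d (u, v)) h := by
  apply Set.Subset.antisymm
  · intro vs hvs
    obtain ⟨us, rfl⟩ := List.getLast?_eq_some_iff.1 hvs.2.1
    cases hu : us.getLast? with
    | none =>
      obtain rfl := List.getLast?_eq_none_iff.1 hu
      rw [List.nil_append, singleton_mem_boundedWalks_iff] at hvs
      exact .inl ((singleton_mem_boundedWalks_iff s E d v η h v).2 hvs)
    | some u =>
      obtain ⟨huv, hus⟩ := (concat_mem_boundedWalks_succ_iff s E d v η h hu).1 hvs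
      exact .inr (Set.mem_iUnion₂.2 ⟨u, huv, us, hus, rfl⟩)
  · refine Set.union_subset (boundedWalks_subset_succ s E d v η h) (Set.iUnion₂_subset ?_)
    rintro u huv _ ⟨us, hus, rfl⟩
    exact (concat_mem_boundedWalks_succ_iff s E d v η h hus.2.1).2 ⟨huv, hus⟩

end BoundedWalks

lemma gc_sub_coe_add_coe (r : ℝ) :
    GaloisConnection (fun x : EReal => x - r) (fun x : EReal => x + r) := fun _ _ =>
  EReal.sub_le_iff_le_add (.inl (EReal.coe_ne_bot r)) (.inl (EReal.coe_ne_top r))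

section MinCost

variable {V M : Type*} [LE M]

/-- The infimum of the costs of the walks in `boundedWalks s E d v η h`; it is `⊤` if there are no
such walks. -/
noncomputable def minCost [AddMonoid M] (s : V) (E : Set (V × V)) (c : V × V → ℝ)
    (d : V × V → M) (v : V) (η : M) (h : ℕ) : EReal :=
  ⨅ vs ∈ boundedWalks s E d v η h, ((walkSum c vs : ℝ) : EReal)

variable (s : V) (E : Set (V × V)) (c : V × V → ℝ) (d : V × V → M) (v : V) (η : M)

lemma minCost_zero [AddMonoid M] [Decidable (v = s ∧ 0 ≤ η)] :
    minCost s E c d v η 0 = if v = s ∧ 0 ≤ η then 0 else ⊤ := by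
  rw [minCost, boundedWalks_zero]
  split_ifs with hv <;> simp [hv, walkSum_singleton]

lemma minCost_succ [AddGroup M] [AddRightMono M] (h : ℕ) :
    minCost s E c d v η (h + 1) = minCost s E c d v η h ⊓
      ⨅ (u) (_ : (u, v) ∈ E), (minCost s E c d u (η - d (u, v)) h + c (u, v)) := by
  have iInf_cost_concat (u : V) :
      ⨅ vs ∈ (· ++ [v]) '' boundedWalks s E d u (η - d (u, v)) h, ((walkSum c vs : ℝ) : EReal) =
        minCost s E c d u (η - d (u, v)) h + c (u, v) := by
    rw [iInf_image, minCost, (gc_sub_coe_add_coe _).u_iInf₂]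
    refine biInf_congr fun us hus => ?_
    rw [walkSum_concat c hus.2.1, EReal.coe_add]
  rw [minCost, boundedWalks_succ, iInf_union]
  simp only [iInf_iUnion, iInf_cost_concat]
  rfl

end MinCost

lemma DP_eq_minCost {V : Type*} [Fintype V] [DecidableEq V] {m : ℕ} (s : V)
    (E : Finset (V × V)) (c : V × V → ℝ) (d : V × V → Fin m → ℤ) (v : V) (η : Fin m → ℤ)
    (h : ℕ) : DP s E c d v η h = minCost s E c d v η h := by
  induction h generalizing v η with
  | zero => classical simp only [DP, minCost_zero, Pi.le_def, Pi.zero_apply]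
  | succ h ih =>
    simp only [DP, minCost_succ, ih, Finset.inf_eq_iInf, Finset.mem_filter_univ, Finset.mem_coe]

theorem stmt11_general {V : Type*} [Fintype V] [DecidableEq V] {m : ℕ} (s : V)
    (E : Finset (V × V)) (c : V × V → ℝ) (d : V × V → Fin m → ℤ) (v : V) (η : Fin m → ℤ)
    (h : ℕ) :
    DP s E c d v η h =
      sInf {x : EReal | ∃ vs : List V,
        vs.head? = some s ∧ vs.getLast? = some v ∧
        vs.IsChain (fun a b => (a, b) ∈ E) ∧
        (vs.zip vs.tail).length ≤ h ∧
        (∀ i, ((vs.zip vs.tail).map fun e => d e i).sum ≤ η i) ∧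
        x = ((((vs.zip vs.tail).map c).sum : ℝ) : EReal)} := by
  rw [DP_eq_minCost, minCost, ← sInf_image]
  congr 1
  ext x
  simp only [boundedWalks, Set.mem_image, Set.mem_ofPred_eq, Pi.le_def, walkSum_apply,
    Finset.mem_coe, and_assoc, eq_comm (b := x)]
  rfl

/-- The dynamic program `DP` computes, for every vertex `v`, pattern
`η ∈ ℤ^m`, and hop bound `h`, exactly the infimum of the total cost over all walks
from `s` to `v` using at most `h` edges whose total weight vector is componentwise at
most `η` (the infimum over `EReal` being `∞ = ⊤` if no such walk exists). -/
theorem stmt11 {V : Type*} [Fintype V] [DecidableEq V] {m : ℕ} (s : V)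
    (E : Finset (V × V)) (c : V × V → ℝ) (hc : ∀ e ∈ E, 0 ≤ c e)
    (d : V × V → Fin m → ℤ) (v : V) (η : Fin m → ℤ) (h : ℕ) :
    DP s E c d v η h =
      sInf {x : EReal | ∃ vs : List V,
        vs.head? = some s ∧ vs.getLast? = some v ∧
        vs.Chain' (fun a b => (a, b) ∈ E) ∧
        (vs.zip vs.tail).length ≤ h ∧
        (∀ i, ((vs.zip vs.tail).map fun e => d e i).sum ≤ η i) ∧
        x = ((((vs.zip vs.tail).map c).sum : ℝ) : EReal)} :=
  stmt11_general s E c d v η h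
end
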